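/- Let a fusion datum on a countable type I admit a sequence (F_n) of nonempty finite subsets of I such that |∂ᴸ_γ F_n|_w / |F_n|_w → 0 as n → ∞ for every γ ∈ I. Let A be a unital C*-algebra and let σ_γ : A → A (γ ∈ I) be ℂ-linear maps with σ_γ(1) = 1 for every γ. Define ξ_n : I → A by ξ_n(α) := |F_n|_w^{-1/2}·(d α)·1_A for α ∈ F_n and ξ_n(α) := 0 otherwise. Then: (1) ⟨ξ_n|ξ_n⟩_A = 1_A for every n; (2) ξ_n(α)·a = a·ξ_n(α) for every α ∈ I, a ∈ A and n; and (3) ‖δ_γ *_σ ξ_n − ξ_n‖_{2,A} → 0 as n → ∞ for every γ ∈ I. Hence (ξ_n) is a Følner sequence for the action, so the action is FA-amenable. -/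

import Mathlib

open scoped BigOperators
open Filter
open scoped Classical

/-- A fusion datum on a type `I`: unit, structure constants, involution and a
dimension function satisfying the unit laws, Frobenius reciprocity and
multiplicativity of the dimension function. -/
structure FusionDatum (I : Type*) where
  e : I
  N : I → I → I → ℕ
  conj : I → I
  d : I → ℝ
  conj_e : conj e = e
  conj_conj : ∀ α, conj (conj α) = α
  N_conj : ∀ α β γ, N α β γ = N (conj β) (conj α) (conj γ)
  one_le_d : ∀ α, 1 ≤ d α
  d_conj : ∀ α, d (conj α) = d α
  N_unit_left : ∀ α γ, N e α γ = if γ = α then 1 else 0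
  N_unit_right : ∀ α γ, N α e γ = if γ = α then 1 else 0
  frobenius₁ : ∀ α β γ, N α β γ = N γ (conj β) α
  frobenius₂ : ∀ α β γ, N α β γ = N (conj α) γ β
  mul_support_finite : ∀ α β, (Function.support fun γ => (N α β γ : ℝ) * d γ).Finite
  d_mul : ∀ α β, (∑ᶠ γ, (N α β γ : ℝ) * d γ) = d α * d β

/-- Weighted cardinality `|S|_w = Σ_{α∈S} (d α)²` of a set. -/
noncomputable def FusionDatum.wcard {I : Type*} (F : FusionDatum I) (S : Set I) : ℝ :=
  ∑ᶠ α ∈ S, F.d α ^ 2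

/-- Right γ-boundary `∂_γ S`. -/
def FusionDatum.rBoundary {I : Type*} (F : FusionDatum I) (γ : I) (S : Set I) : Set I :=
  {α | (α ∈ S ∧ ∃ β ∉ S, 0 < F.N α γ β) ∨ (α ∉ S ∧ ∃ β ∈ S, 0 < F.N α γ β)}

/-- Left γ-boundary `∂ᴸ_γ S`. -/
def FusionDatum.lBoundary {I : Type*} (F : FusionDatum I) (γ : I) (S : Set I) : Set I :=
  {α | (α ∈ S ∧ ∃ β ∉ S, 0 < F.N γ α β) ∨ (α ∉ S ∧ ∃ β ∈ S, 0 < F.N γ α β)}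

/-- ℓ²-norm `(Σ_β |g β|²)^{1/2}` of a (finitely supported) function. -/
noncomputable def l2norm {I : Type*} (g : I → ℂ) : ℝ :=
  Real.sqrt (∑ᶠ β, ‖g β‖ ^ 2)

/-- The convolution operator `l_γ`. -/
noncomputable def FusionDatum.lconv {I : Type*} (F : FusionDatum I) (γ : I) (f : I → ℂ) :
    I → ℂ :=
  fun β => (1 / (F.d γ : ℂ)) * ∑ᶠ η, (F.N γ η β : ℂ) * f η

/-- A state on a unital C*-algebra: a unital positive linear functional. -/
structure CStarState (A : Type*) [NormedRing A] [StarRing A] [NormedAlgebra ℂ A] where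
  toFun : A →ₗ[ℂ] ℂ
  map_one : toFun 1 = 1
  pos : ∀ a : A, 0 ≤ (toFun (star a * a)).re ∧ (toFun (star a * a)).im = 0

/-- A CFA-type action of a fusion datum on a unital C*-algebra: `T α a` encodes `χ(α)·a`. -/
structure CFAAction {I : Type*} (F : FusionDatum I) (A : Type*)
    [NormedRing A] [StarRing A] [NormedAlgebra ℂ A] where
  T : I → A →ₗ[ℂ] A
  map_star : ∀ α a, T α (star a) = star (T α a)
  norm_le : ∀ α a, ‖T α a‖ ≤ F.d α * ‖a‖
  map_one : ∀ α, T α 1 = (F.d α : ℂ) • (1 : A)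
  comp_eq : ∀ α β a, T α (T β a) = ∑ᶠ γ, (F.N α β γ) • T γ a

/-- `⟨f|f⟩_A = Σ_α f α · (f α)*`. -/
noncomputable def innerA {I A : Type*} [NormedRing A] [StarRing A] (f : I → A) : A :=
  ∑ᶠ α, f α * star (f α)

/-- `‖f‖_{2,A} = ‖⟨f|f⟩_A‖^{1/2}`. -/
noncomputable def norm2A {I A : Type*} [NormedRing A] [StarRing A] (f : I → A) : ℝ :=
  Real.sqrt ‖innerA f‖

/-- Twisted convolution `(δ_γ *_σ f)(β) = (1/(d γ))·Σ_η N γ η β · σ_γ(f η)`. -/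
noncomputable def FusionDatum.tconv {I A : Type*} [NormedRing A] [NormedAlgebra ℂ A]
    (F : FusionDatum I) (σ : I → A → A) (γ : I) (f : I → A) : I → A :=
  fun β => (((F.d γ)⁻¹ : ℝ) : ℂ) • ∑ᶠ η, (F.N γ η β) • σ γ (f η)

/-- The ℂ-valued Følner vectors `ξ_F = |F|_w^{-1/2} Σ_{α∈F} d α · δ_α`. -/
noncomputable def xiC {I : Type*} (F : FusionDatum I) (S : Finset I) : I → ℂ :=
  fun α => if α ∈ S then (((Real.sqrt (F.wcard (S : Set I)))⁻¹ * F.d α : ℝ) : ℂ) else 0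

/-- The A-valued Følner vectors `ξ_F = |F|_w^{-1/2} Σ_{α∈F} d α · δ_α ⊗ 1_A`. -/
noncomputable def xiA {I : Type*} (F : FusionDatum I) (S : Finset I)
    (A : Type*) [NormedRing A] [NormedAlgebra ℂ A] : I → A :=
  fun α => if α ∈ S then (((Real.sqrt (F.wcard (S : Set I)))⁻¹ * F.d α : ℝ) : ℂ) • (1 : A)
    else 0

/-!
The vectors `ξ_n` take values in the scalars `ℂ · 1`, which the maps `σ_γ` fix, so everything
reduces to the scalar convolution `l_γ` on `ℂ`-valued functions. By Frobenius reciprocity and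
multiplicativity of `d`, the operator `l_γ` is monotone and fixes `d`. Hence `l_γ (1_S d)` and
`1_S d` both lie between `0` and `d`. They agree off the left boundary of `S` with respect to the
conjugate of `γ`: the neighbours of such a point lie all in `S` or all outside `S`. Therefore
`‖l_γ (1_S d) - 1_S d‖₂²` is at most the weighted cardinality of this boundary.
-/

section ComplexOrder

open Set
open scoped ComplexOrder

theorem norm_sub_le_of_mem_Icc_zero_ofReal {r : ℝ} {z w : ℂ} (hz : z ∈ Icc 0 (r : ℂ))
    (hw : w ∈ Icc 0 (r : ℂ)) : ‖z - w‖ ≤ r := by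
  lift z to ℝ using (Complex.nonneg_iff.1 hz.1).2.symm
  lift w to ℝ using (Complex.nonneg_iff.1 hw.1).2.symm
  simp only [mem_Icc, Complex.zero_le_real, Complex.real_le_real] at hz hw
  rw [← Complex.ofReal_sub, Complex.norm_real]
  exact abs_sub_le_of_nonneg_of_le hz.1 hz.2 hw.1 hw.2

end ComplexOrder

namespace FusionDatum

open Function Set

variable {I : Type*} (F : FusionDatum I)

theorem d_pos (α : I) : 0 < F.d α :=
  one_pos.trans_le (F.one_le_d α)

theorem finite_setOf_N_ne_zero_right (α β : I) : {γ | F.N α β γ ≠ 0}.Finite := by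
  simpa [Function.support, (F.d_pos _).ne'] using F.mul_support_finite α β

theorem finite_setOf_N_ne_zero_mid (α γ : I) : {β | F.N α β γ ≠ 0}.Finite := by
  simpa only [F.frobenius₂ α] using F.finite_setOf_N_ne_zero_right (F.conj α) γ

theorem finsum_N_mul_d_mid (α γ : I) : ∑ᶠ β, (F.N α β γ : ℝ) * F.d β = F.d α * F.d γ := by
  simpa only [F.frobenius₂ α, F.d_conj] using F.d_mul (F.conj α) γ

theorem wcard_coe (S : Finset I) : F.wcard (S : Set I) = ∑ α ∈ S, F.d α ^ 2 :=
  finsum_mem_coe_finset _ S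

theorem wcard_nonneg (S : Set I) : 0 ≤ F.wcard S :=
  finsum_nonneg fun _ => finsum_nonneg fun _ => sq_nonneg _

theorem wcard_pos {S : Finset I} (hS : S.Nonempty) : 0 < F.wcard (S : Set I) := by
  rw [wcard_coe]
  exact Finset.sum_pos (fun α _ => pow_pos (F.d_pos α) 2) hS

theorem finite_lBoundary {S : Set I} (hS : S.Finite) (γ : I) : (F.lBoundary γ S).Finite := by
  refine (hS.union (hS.biUnion fun β _ => F.finite_setOf_N_ne_zero_mid γ β)).subset ?_
  rintro α (⟨hα, -⟩ | ⟨-, β, hβ, hN⟩)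
  · exact .inl hα
  · exact .inr (mem_biUnion hβ hN.ne')

theorem mem_iff_mem_of_notMem_lBoundary {S : Set I} {α β γ : I} (hα : α ∉ F.lBoundary γ S)
    (hN : F.N γ α β ≠ 0) : α ∈ S ↔ β ∈ S := by
  have hpos := Nat.pos_of_ne_zero hN
  refine ⟨fun hαS => ?_, fun hβS => ?_⟩
  · by_contra hβS
    exact hα (.inl ⟨hαS, β, hβS, hpos⟩)
  · by_contra hαS
    exact hα (.inr ⟨hαS, β, hβS, hpos⟩)

/-- The dimension function with complex values, so that the convolution operators `lconv` can act
on it; the vectors `xiC` are normalised restrictions of it. -/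
noncomputable def dimC (α : I) : ℂ := F.d α

theorem hasFiniteSupport_N_mul (γ β : I) (f : I → ℂ) :
    HasFiniteSupport fun η => (F.N γ η β : ℂ) * f η :=
  (F.finite_setOf_N_ne_zero_mid γ β).subset fun η hη => by
    simpa using left_ne_zero_of_mul hη

theorem lconv_congr {γ β : I} {f g : I → ℂ} (h : ∀ η, F.N γ η β ≠ 0 → f η = g η) :
    F.lconv γ f β = F.lconv γ g β := by
  refine congrArg _ (finsum_congr fun η => ?_)
  by_cases hN : F.N γ η β = 0
  · simp [hN]
  · rw [h η hN]

theorem lconv_smul (γ : I) (c : ℂ) (f : I → ℂ) : F.lconv γ (c • f) = c • F.lconv γ f := by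
  ext β
  simp only [lconv, Pi.smul_apply, smul_eq_mul, mul_left_comm _ c]
  rw [← mul_finsum, mul_left_comm]

theorem lconv_zero (γ : I) : F.lconv γ 0 = 0 := by
  simpa using F.lconv_smul γ 0 0

theorem lconv_dimC (γ : I) : F.lconv γ F.dimC = F.dimC := by
  ext β
  have hsum : ∑ᶠ η, (F.N γ η β : ℂ) * F.d η = F.d γ * F.d β := by
    rw [← Complex.ofReal_mul, ← F.finsum_N_mul_d_mid γ β]
    simpa using (Complex.ofRealHom.toAddMonoidHom.map_finsum_of_injective
      Complex.ofReal_injective fun η => (F.N γ η β : ℝ) * F.d η).symm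
  have hγ : (F.d γ : ℂ) ≠ 0 := mod_cast (F.d_pos γ).ne'
  simp only [lconv, dimC, hsum, one_div, inv_mul_cancel_left₀ hγ]

section Order

open scoped ComplexOrder

theorem lconv_mono (γ : I) : Monotone (F.lconv γ) := by
  intro f g hfg β
  have hd : (0 : ℂ) ≤ 1 / F.d γ := one_div_nonneg.2 (mod_cast (F.d_pos γ).le)
  refine mul_le_mul_of_nonneg_left ?_ hd
  exact finsum_le_finsum' (F.hasFiniteSupport_N_mul γ β f) (F.hasFiniteSupport_N_mul γ β g)
    fun η => mul_le_mul_of_nonneg_left (hfg η) (Nat.cast_nonneg _)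

theorem indicator_dimC_mem_Icc (S : Set I) : S.indicator F.dimC ∈ Icc 0 F.dimC := by
  have hd : ∀ α, 0 ≤ F.dimC α := fun α => Complex.zero_le_real.2 (F.d_pos α).le
  exact ⟨indicator_nonneg fun α _ => hd α, indicator_le_self' fun α _ => hd α⟩

theorem lconv_mem_Icc {γ : I} {f : I → ℂ} (hf : f ∈ Icc 0 F.dimC) :
    F.lconv γ f ∈ Icc 0 F.dimC := by
  simpa only [lconv_zero, lconv_dimC] using (F.lconv_mono γ).mapsTo_Icc hf

end Order

theorem norm_lconv_indicator_dimC_sub_le (γ : I) (S : Set I) (β : I) :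
    ‖(F.lconv γ (S.indicator F.dimC) - S.indicator F.dimC) β‖ ≤ F.d β := by
  have hS := F.indicator_dimC_mem_Icc S
  have hconv := F.lconv_mem_Icc (γ := γ) hS
  exact norm_sub_le_of_mem_Icc_zero_ofReal ⟨hconv.1 β, hconv.2 β⟩ ⟨hS.1 β, hS.2 β⟩

theorem lconv_indicator_dimC_eq_of_notMem_lBoundary {γ β : I} {S : Set I}
    (hβ : β ∉ F.lBoundary (F.conj γ) S) :
    F.lconv γ (S.indicator F.dimC) β = S.indicator F.dimC β := by
  have hmem : ∀ η, F.N γ η β ≠ 0 → (β ∈ S ↔ η ∈ S) := fun η hη =>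
    F.mem_iff_mem_of_notMem_lBoundary hβ (F.frobenius₂ γ η β ▸ hη)
  by_cases hS : β ∈ S
  · rw [F.lconv_congr fun η hη => indicator_of_mem ((hmem η hη).1 hS) _, lconv_dimC,
      indicator_of_mem hS]
  · rw [F.lconv_congr (g := 0) fun η hη => indicator_of_notMem (mt (hmem η hη).2 hS) _, lconv_zero,
      indicator_of_notMem hS, Pi.zero_apply]

theorem support_lconv_indicator_dimC_sub_subset (γ : I) (S : Set I) :
    support (F.lconv γ (S.indicator F.dimC) - S.indicator F.dimC) ⊆
      F.lBoundary (F.conj γ) S :=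
  support_subset_iff'.2 fun _ hβ =>
    sub_eq_zero.2 (F.lconv_indicator_dimC_eq_of_notMem_lBoundary hβ)

theorem tconv_algebraMap {A : Type*} [NormedRing A] [NormedAlgebra ℂ A] {σ : I → A → A} {γ : I}
    (hσ : ∀ c, σ γ (algebraMap ℂ A c) = algebraMap ℂ A c) (f : I → ℂ) :
    F.tconv σ γ (fun α => algebraMap ℂ A (f α)) = fun β => algebraMap ℂ A (F.lconv γ f β) := by
  ext β
  have hsum : algebraMap ℂ A (∑ᶠ η, (F.N γ η β : ℂ) * f η) =
      ∑ᶠ η, F.N γ η β • algebraMap ℂ A (f η) := by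
    rw [map_finsum _ (F.hasFiniteSupport_N_mul γ β f)]
    simp
  simp only [tconv, lconv, hσ, map_mul, hsum]
  simp [Algebra.smul_def]

end FusionDatum

section L2Norm

open Function Set

variable {I : Type*} (F : FusionDatum I) {A : Type*} [NormedRing A] [NormedAlgebra ℂ A]

theorem l2norm_nonneg (g : I → ℂ) : 0 ≤ l2norm g :=
  Real.sqrt_nonneg _

theorem l2norm_smul (c : ℂ) (g : I → ℂ) : l2norm (c • g) = ‖c‖ * l2norm g := by
  simp only [l2norm, Pi.smul_apply, norm_smul, mul_pow]
  rw [← mul_finsum, Real.sqrt_mul (sq_nonneg _), Real.sqrt_sq (norm_nonneg _)]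

theorem l2norm_sq (g : I → ℂ) : l2norm g ^ 2 = ∑ᶠ β, ‖g β‖ ^ 2 :=
  Real.sq_sqrt (finsum_nonneg fun _ => sq_nonneg _)

theorem l2norm_indicator_dimC (S : Set I) : l2norm (S.indicator F.dimC) = √(F.wcard S) := by
  rw [l2norm, FusionDatum.wcard, finsum_mem_def]
  congr! 3 with β
  by_cases hβ : β ∈ S <;> simp [FusionDatum.dimC, hβ]

theorem l2norm_le_sqrt_wcard {g : I → ℂ} {T : Set I} (hT : T.Finite) (hsupp : support g ⊆ T)
    (hg : ∀ β, ‖g β‖ ≤ F.d β) : l2norm g ≤ √(F.wcard T) := by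
  refine Real.sqrt_le_sqrt ?_
  rw [FusionDatum.wcard, finsum_mem_def]
  have hsq : support (fun β => ‖g β‖ ^ 2) ⊆ T := fun β hβ => hsupp (by simpa using hβ)
  refine finsum_le_finsum' (hT.subset hsq) (hT.subset support_indicator_subset) ?_
  rw [← indicator_eq_self.2 hsq]
  exact fun β => indicator_le_indicator (pow_le_pow_left₀ (norm_nonneg _) (hg β) 2)

theorem innerA_algebraMap [StarRing A] [StarModule ℂ A] {g : I → ℂ} (hg : HasFiniteSupport g) :
    innerA (fun α => algebraMap ℂ A (g α)) = algebraMap ℂ A ((l2norm g ^ 2 : ℝ) : ℂ) := by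
  have hmul : ∀ α, algebraMap ℂ A (g α) * star (algebraMap ℂ A (g α)) =
      algebraMap ℂ A ((‖g α‖ ^ 2 : ℝ) : ℂ) := fun α => by
    rw [← algebraMap_star_comm, ← map_mul]
    simp [Complex.mul_conj']
  have hsq : HasFiniteSupport fun α => ‖g α‖ ^ 2 := hg.subset fun α => by simp
  simp only [innerA, hmul, l2norm_sq]
  exact (((algebraMap ℂ A).comp Complex.ofRealHom).toAddMonoidHom.map_finsum hsq).symm

theorem norm2A_algebraMap [StarRing A] [StarModule ℂ A] {g : I → ℂ} (hg : HasFiniteSupport g) :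
    norm2A (fun α => algebraMap ℂ A (g α)) = l2norm g * √‖(1 : A)‖ := by
  rw [norm2A, innerA_algebraMap hg, norm_algebraMap, Complex.norm_real, norm_pow,
    Real.sqrt_mul (by positivity), Real.sqrt_sq (norm_nonneg _),
    Real.norm_of_nonneg (l2norm_nonneg g)]

end L2Norm

section FolnerVectors

open Function

variable {I : Type*} (F : FusionDatum I) (S : Finset I)
  {A : Type*} [NormedRing A] [NormedAlgebra ℂ A]

theorem xiC_eq_smul_indicator :
    xiC F S = ((√(F.wcard S))⁻¹ : ℂ) • (S : Set I).indicator F.dimC := by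
  ext α
  by_cases hα : α ∈ S <;> simp [xiC, FusionDatum.dimC, hα]

theorem xiA_eq_algebraMap : xiA F S A = fun α => algebraMap ℂ A (xiC F S α) := by
  ext α
  by_cases hα : α ∈ S <;> simp [xiA, xiC, hα, Algebra.algebraMap_eq_smul_one]

theorem hasFiniteSupport_xiC : HasFiniteSupport (xiC F S) :=
  S.finite_toSet.subset (support_subset_iff'.2 fun _ hα => if_neg hα)

theorem l2norm_xiC {S : Finset I} (hS : S.Nonempty) : l2norm (xiC F S) = 1 := by
  have hw : √(F.wcard S) ≠ 0 := (Real.sqrt_pos.2 (F.wcard_pos hS)).ne'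
  rw [xiC_eq_smul_indicator, l2norm_smul, l2norm_indicator_dimC, ← Complex.ofReal_inv,
    Complex.norm_real, Real.norm_of_nonneg (by positivity), inv_mul_cancel₀ hw]

theorem lconv_xiC_sub_eq_smul (γ : I) :
    F.lconv γ (xiC F S) - xiC F S = ((√(F.wcard S))⁻¹ : ℂ) •
      (F.lconv γ ((S : Set I).indicator F.dimC) - (S : Set I).indicator F.dimC) := by
  rw [xiC_eq_smul_indicator, FusionDatum.lconv_smul, smul_sub]

theorem hasFiniteSupport_lconv_xiC_sub (γ : I) :
    HasFiniteSupport (F.lconv γ (xiC F S) - xiC F S) := by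
  rw [lconv_xiC_sub_eq_smul]
  exact (F.finite_lBoundary S.finite_toSet _).subset
    ((support_const_smul_subset _ _).trans (F.support_lconv_indicator_dimC_sub_subset γ S))

theorem l2norm_lconv_xiC_sub_le (γ : I) :
    l2norm (F.lconv γ (xiC F S) - xiC F S) ≤
      √(F.wcard (F.lBoundary (F.conj γ) S) / F.wcard S) := by
  rw [lconv_xiC_sub_eq_smul, l2norm_smul, ← Complex.ofReal_inv, Complex.norm_real,
    Real.norm_of_nonneg (by positivity), Real.sqrt_div (F.wcard_nonneg _), div_eq_inv_mul]
  gcongr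
  exact l2norm_le_sqrt_wcard F (F.finite_lBoundary S.finite_toSet _)
    (F.support_lconv_indicator_dimC_sub_subset γ S) (F.norm_lconv_indicator_dimC_sub_le γ S)

theorem tendsto_l2norm_lconv_xiC_sub {ι : Type*} {l : Filter ι} {Fn : ι → Finset I} {γ : I}
    (hFol : Tendsto (fun n => F.wcard (F.lBoundary (F.conj γ) (Fn n)) / F.wcard (Fn n))
      l (nhds 0)) :
    Tendsto (fun n => l2norm (F.lconv γ (xiC F (Fn n)) - xiC F (Fn n))) l (nhds 0) :=
  squeeze_zero (fun _ => l2norm_nonneg _) (fun n => l2norm_lconv_xiC_sub_le F (Fn n) γ)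
    (by simpa only [Real.sqrt_zero] using hFol.sqrt)

theorem norm2A_tconv_xiA_sub [StarRing A] [StarModule ℂ A] {σ : I → A → A} {γ : I}
    (hσ : ∀ c, σ γ (algebraMap ℂ A c) = algebraMap ℂ A c) :
    norm2A (F.tconv σ γ (xiA F S A) - xiA F S A) =
      l2norm (F.lconv γ (xiC F S) - xiC F S) * √‖(1 : A)‖ := by
  rw [← norm2A_algebraMap (hasFiniteSupport_lconv_xiC_sub F S γ), xiA_eq_algebraMap,
    F.tconv_algebraMap hσ]
  simp only [Pi.sub_def, map_sub]

end FolnerVectors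

theorem stmt7_general {I ι : Type*} (F : FusionDatum I) {l : Filter ι} (Fn : ι → Finset I)
    (hne : ∀ n, (Fn n).Nonempty)
    (hFol : ∀ γ : I, Tendsto
      (fun n => F.wcard (F.lBoundary γ (Fn n : Set I)) / F.wcard (Fn n : Set I)) l (nhds 0))
    {A : Type*} [NormedRing A] [StarRing A] [NormedAlgebra ℂ A] [StarModule ℂ A]
    (σ : I → A → A) (hσ : ∀ γ c, σ γ (algebraMap ℂ A c) = algebraMap ℂ A c) :
    (∀ n, innerA (xiA F (Fn n) A) = 1) ∧
    (∀ (n : ι) (α : I) (a : A), xiA F (Fn n) A α * a = a * xiA F (Fn n) A α) ∧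
    ∀ γ : I, Tendsto (fun n => norm2A (F.tconv σ γ (xiA F (Fn n) A) - xiA F (Fn n) A))
      l (nhds 0) := by
  refine ⟨fun n => ?_, fun n α a => ?_, fun γ => ?_⟩
  · simp [xiA_eq_algebraMap, innerA_algebraMap (hasFiniteSupport_xiC F _), l2norm_xiC F (hne n)]
  · rw [xiA_eq_algebraMap]
    exact Algebra.commutes _ a
  · have hlim := tendsto_l2norm_lconv_xiC_sub F (hFol (F.conj γ))
    simpa only [norm2A_tconv_xiA_sub F _ (hσ γ), zero_mul] using hlim.mul_const √‖(1 : A)‖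

/-- given a left-Følner sequence `(F_n)` and unital ℂ-linear maps
`σ_γ : A → A`, the `A`-valued vectors `ξ_n` form a Følner sequence for the action:
`⟨ξ_n|ξ_n⟩_A = 1`, `ξ_n` is central-valued, and `‖δ_γ *_σ ξ_n − ξ_n‖_{2,A} → 0`. -/
theorem stmt7 {I : Type*} [Countable I] (F : FusionDatum I) (Fn : ℕ → Finset I)
    (hne : ∀ n, (Fn n).Nonempty)
    (hFol : ∀ γ : I, Tendsto
      (fun n => F.wcard (F.lBoundary γ (Fn n : Set I)) / F.wcard (Fn n : Set I))
      atTop (nhds 0))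
    {A : Type*} [NormedRing A] [StarRing A] [CStarRing A] [NormedAlgebra ℂ A]
    [StarModule ℂ A] [CompleteSpace A]
    (σ : I → A →ₗ[ℂ] A) (hσ : ∀ γ : I, σ γ 1 = 1) :
    (∀ n, innerA (xiA F (Fn n) A) = 1) ∧
    (∀ (n : ℕ) (α : I) (a : A), xiA F (Fn n) A α * a = a * xiA F (Fn n) A α) ∧
    ∀ γ : I, Tendsto
      (fun n => norm2A (F.tconv (fun γ' => ⇑(σ γ')) γ (xiA F (Fn n) A) - xiA F (Fn n) A))
      atTop (nhds 0) :=
  stmt7_general F Fn hne hFol (fun γ => σ γ) fun γ c => by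
    rw [Algebra.algebraMap_eq_smul_one, map_smul, hσ]
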